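/- arXiv:1812.00830 — 5 statements merged into one kernel-verified Lean document; each statement's English description precedes it below -/
import Mathlib

section
/- Let (R,𝔪) be an artinian local ring which is injective as a module over itself (i.e., a zero-dimensional Gorenstein local ring). Then an arbitrary (not necessarily finitely generated) R-module M is weakly reflexive if and only if M is finitely generated. -/
/-!
If `R` is self-injective, weak reflexivity passes to quotients, so it passes from free modules of
finite rank to all finitely generated ones. If moreover every simple module embeds in `R`, which
holds for artinian `R` because all maximal ideals are associated primes, then functionals separate
points of every module. Consequently weak reflexivity also passes to submodules, and every
submodule of the dual of a weakly reflexive `M` is the annihilator of a submodule of `M`. In an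
infinite direct sum of nonzero modules the functionals vanishing on all but finitely many summands
form a proper submodule of the dual with zero common kernel, so such a sum is not weakly reflexive.
Hence weakly reflexive semisimple modules are finite, and the radical filtration over an artinian
ring reduces the general case to the semisimple one.
-/

open Module

/-- A commutative ring is a Kasch ring if it contains a copy of each of its simple modules; the
simple modules are represented as the quotients by maximal ideals. -/
class IsKaschRing (R : Type*) [CommRing R] : Prop where
  exists_injective (𝔪 : Ideal R) [𝔪.IsMaximal] :
    ∃ f : R ⧸ 𝔪 →ₗ[R] R, Function.Injective f

theorem IsKaschRing.of_isFractionRing (R : Type*) [CommRing R] [IsNoetherianRing R]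
    [IsFractionRing R R] : IsKaschRing R where
  exists_injective 𝔪 _ :=
    ((isAssociatedPrime_iff_exists_injective_linearMap 𝔪 R).mp
      (Ideal.IsMaximal.mem_associatedPrimes_of_isFractionRing R 𝔪)).2

instance IsKaschRing.of_isArtinianRing (R : Type*) [CommRing R] [IsArtinianRing R] :
    IsKaschRing R :=
  have : IsFractionRing R R := IsFractionRing.self_iff_nonZeroDivisors_le_isUnit.mpr
    fun _ ↦ IsArtinianRing.isUnit_of_mem_nonZeroDivisors
  .of_isFractionRing R

/-- The weakly reflexive modules: those whose evaluation map into the bidual is surjective. -/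
def IsWeaklyReflexive (R M : Type*) [CommRing R] [AddCommGroup M] [Module R M] : Prop :=
  Function.Surjective (Dual.eval R M)

section SelfInjective

variable {R M N : Type*} [CommRing R] [Module.Injective R R]
  [AddCommGroup M] [Module R M] [AddCommGroup N] [Module R N]

theorem IsWeaklyReflexive.of_surjective (hM : IsWeaklyReflexive R M) (p : M →ₗ[R] N)
    (hp : Function.Surjective p) : IsWeaklyReflexive R N := by
  intro φ
  obtain ⟨ψ, hψ⟩ := Module.Injective.extension_property R R _ _ p.dualMap
    (LinearMap.dualMap_injective_of_surjective hp) φ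
  obtain ⟨m, rfl⟩ := hM ψ
  exact ⟨p m, hψ⟩

theorem IsWeaklyReflexive.of_finite [Module.Finite R M] : IsWeaklyReflexive R M := by
  obtain ⟨n, p, hp⟩ := Module.Finite.exists_fin' R M
  exact IsWeaklyReflexive.of_surjective (bijective_dual_eval R (Fin n → R)).surjective p hp

variable [IsKaschRing R]

theorem exists_dual_apply_ne_zero {x : M} (hx : x ≠ 0) : ∃ f : Dual R M, f x ≠ 0 := by
  let s := LinearMap.toSpanSingleton R M x
  have ker_ne_top : LinearMap.ker s ≠ ⊤ := by
    rwa [Ne, LinearMap.ker_eq_top, LinearMap.toSpanSingleton_eq_zero_iff]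
  obtain ⟨𝔪, h𝔪, ker_le⟩ := Ideal.exists_le_maximal _ ker_ne_top
  obtain ⟨j, hj⟩ := IsKaschRing.exists_injective 𝔪
  -- `f` extends the composite `R ∙ x ≃ R ⧸ ker s → R ⧸ 𝔪 → R`.
  obtain ⟨f, hf⟩ := Module.Injective.extension_property R R _ _
    ((LinearMap.ker s).liftQ s le_rfl)
    (LinearMap.ker_eq_bot.mp (Submodule.ker_liftQ_eq_bot _ _ _ le_rfl))
    (j ∘ₗ Submodule.factor ker_le)
  have hfx : f x = j (Submodule.Quotient.mk 1) :=
    one_smul R x ▸ LinearMap.congr_fun hf (Submodule.Quotient.mk 1)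
  refine ⟨f, ?_⟩
  rw [hfx, map_ne_zero_iff j hj, Ne, Submodule.Quotient.mk_eq_zero, ← Ideal.eq_top_iff_one]
  exact h𝔪.ne_top

theorem exists_mem_dualAnnihilator_apply_ne_zero {p : Submodule R M} {x : M} (hx : x ∉ p) :
    ∃ f ∈ p.dualAnnihilator, f x ≠ 0 := by
  have mkQ_ne_zero : p.mkQ x ≠ 0 := by simpa using hx
  obtain ⟨g, hg⟩ := exists_dual_apply_ne_zero (R := R) mkQ_ne_zero
  refine ⟨g ∘ₗ p.mkQ, (Submodule.mem_dualAnnihilator _).mpr fun y hy ↦ ?_, hg⟩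
  simp [(Submodule.Quotient.mk_eq_zero p).mpr hy]

namespace IsWeaklyReflexive

theorem submodule (hM : IsWeaklyReflexive R M) (p : Submodule R M) : IsWeaklyReflexive R p := by
  intro φ
  obtain ⟨m, hm⟩ := hM (φ ∘ₗ p.dualRestrict)
  have apply_eq (f : Dual R M) : f m = φ (p.dualRestrict f) := LinearMap.congr_fun hm f
  have m_mem : m ∈ p := by
    by_contra h
    obtain ⟨f, hf, hfm⟩ := exists_mem_dualAnnihilator_apply_ne_zero h
    rw [← Submodule.dualRestrict_ker_eq_dualAnnihilator, LinearMap.mem_ker] at hf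
    exact hfm (by rw [apply_eq, hf, map_zero])
  refine ⟨⟨m, m_mem⟩, LinearMap.ext fun f ↦ ?_⟩
  obtain ⟨g, rfl⟩ := Module.Injective.extension_property R R _ _ p.subtype p.injective_subtype f
  exact apply_eq g

theorem dualAnnihilator_dualCoannihilator (hM : IsWeaklyReflexive R M)
    (U : Submodule R (Dual R M)) : U.dualCoannihilator.dualAnnihilator = U := by
  refine le_antisymm (fun f hf ↦ ?_) U.le_dualCoannihilator_dualAnnihilator
  by_contra hfU
  obtain ⟨φ, hφU, hφf⟩ := exists_mem_dualAnnihilator_apply_ne_zero hfU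
  obtain ⟨m, rfl⟩ := hM φ
  exact hφf ((Submodule.mem_dualAnnihilator f).mp hf m hφU)

end IsWeaklyReflexive

end SelfInjective

section DirectSum

variable {R ι : Type*} [CommRing R] [DecidableEq ι] {S : ι → Type*}
  [∀ i, AddCommGroup (S i)] [∀ i, Module R (S i)]

variable (R S) in
/-- The functionals on `⨁ i, S i` that vanish on all but finitely many summands, i.e. the image of
`⨁ i, (S i)*` in `(⨁ i, S i)* = ∏ i, (S i)*`. -/
def finiteSupportDual : Submodule R (Dual R (Π₀ i, S i)) where
  carrier := {f | {i | f ∘ₗ DFinsupp.lsingle i ≠ 0}.Finite}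
  zero_mem' := by simp
  add_mem' {f g} hf hg := (hf.union hg).subset fun i hi ↦ by
    by_contra h
    simp_all [LinearMap.add_comp]
  smul_mem' c f hf := hf.subset fun i hi h ↦ hi (by rw [LinearMap.smul_comp, h, smul_zero])

theorem comp_lapply_mem_finiteSupportDual (i : ι) (g : Dual R (S i)) :
    g ∘ₗ DFinsupp.lapply i ∈ finiteSupportDual R S := by
  refine (Set.finite_singleton i).subset fun k hk ↦ ?_
  by_contra hki
  exact hk (by rw [LinearMap.comp_assoc, DFinsupp.lapply_comp_lsingle_of_ne _ _ (Ne.symm hki),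
    LinearMap.comp_zero])

variable [Module.Injective R R] [IsKaschRing R]

theorem dualCoannihilator_finiteSupportDual :
    (finiteSupportDual R S).dualCoannihilator = ⊥ := by
  refine (Submodule.eq_bot_iff _).mpr fun x hx ↦ DFinsupp.ext fun i ↦ ?_
  by_contra hxi
  obtain ⟨g, hg⟩ := exists_dual_apply_ne_zero (R := R) hxi
  exact hg ((Submodule.mem_dualCoannihilator x).mp hx _ (comp_lapply_mem_finiteSupportDual i g))

theorem finite_of_finiteSupportDual_eq_top [∀ i, Nontrivial (S i)]
    (h : finiteSupportDual R S = ⊤) : Finite ι := by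
  choose x hx using fun i ↦ exists_ne (0 : S i)
  choose g hg using fun i ↦ exists_dual_apply_ne_zero (R := R) (hx i)
  let f : Dual R (Π₀ i, S i) := DFinsupp.lsum R g
  have f_comp_ne_zero (i : ι) : f ∘ₗ DFinsupp.lsingle i ≠ 0 := fun h0 ↦
    hg i (by simpa [f] using LinearMap.congr_fun h0 (x i))
  have f_mem : f ∈ finiteSupportDual R S := h ▸ Submodule.mem_top
  exact Set.finite_univ_iff.mp (f_mem.subset fun i _ ↦ f_comp_ne_zero i)

end DirectSum

namespace IsWeaklyReflexive

variable {R M : Type*} [CommRing R] [Module.Injective R R] [IsKaschRing R]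
  [AddCommGroup M] [Module R M]

theorem finite_index {ι : Type*} {S : ι → Type*} [∀ i, AddCommGroup (S i)] [∀ i, Module R (S i)]
    [∀ i, Nontrivial (S i)] (h : IsWeaklyReflexive R (Π₀ i, S i)) : Finite ι := by
  classical
  refine finite_of_finiteSupportDual_eq_top (R := R) (S := S) ?_
  rw [← h.dualAnnihilator_dualCoannihilator (finiteSupportDual R S),
    dualCoannihilator_finiteSupportDual, Submodule.dualAnnihilator_bot]

theorem finite_of_isSemisimpleModule [IsSemisimpleModule R M]
    (hM : IsWeaklyReflexive R M) : Module.Finite R M := by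
  obtain ⟨s, e, -, hs⟩ := IsSemisimpleModule.exists_linearEquiv_dfinsupp R M
  have nontrivial_summand (S : s) : Nontrivial S.1 := IsSimpleModule.nontrivial R S.1
  have : Finite s := (hM.of_surjective e.toLinearMap e.surjective).finite_index
  exact Module.Finite.equiv e.symm

theorem finite [IsSemiprimaryRing R] (hM : IsWeaklyReflexive R M) :
    Module.Finite R M := by
  revert hM
  refine IsSemiprimaryRing.induction R R M
    (P := fun M ↦ IsWeaklyReflexive R M → Module.Finite R M)
    (fun M _ _ _ _ _ _ hM ↦ hM.finite_of_isSemisimpleModule)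
    (fun M _ _ _ _ hN hQ hM ↦ ?_)
  have := hN (hM.submodule _)
  have := hQ (hM.of_surjective _ (Submodule.mkQ_surjective _))
  exact Module.Finite.of_submodule_quotient (Ring.jacobson R • (⊤ : Submodule R M))

end IsWeaklyReflexive

theorem stmt0_general {R M : Type*} [CommRing R] [IsArtinianRing R] [Module.Injective R R]
    [AddCommGroup M] [Module R M] :
    Function.Surjective (Dual.eval R M) ↔ Module.Finite R M :=
  ⟨IsWeaklyReflexive.finite, fun _ ↦ IsWeaklyReflexive.of_finite⟩

/-- Let `(R,𝔪)` be an artinian local ring which is injective as a module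
over itself (i.e. a zero-dimensional Gorenstein local ring). Then an arbitrary (not
necessarily finitely generated) `R`-module `M` is weakly reflexive (the evaluation map
`M → M**` is surjective) if and only if `M` is finitely generated. -/
theorem stmt0 (R : Type u) [CommRing R] [IsArtinianRing R] [IsLocalRing R]
    [Module.Injective R R]
    (M : Type u) [AddCommGroup M] [Module R M] :
    Function.Surjective (Module.Dual.eval R M) ↔ Module.Finite R M :=
  stmt0_general
end

section
/- Let (R,𝔪) be a noetherian local ring with 𝔪² = 0 and let M be a finitely generated weakly reflexive R-module. Then M is totally reflexive: M is reflexive and Ext^i_R(M,R) = 0 and Ext^i_R(M*,R) = 0 for all i > 0. -/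
open CategoryTheory

/-!
Suppose first that `𝔪` is generated by each of its nonzero elements. Then `R` is self-injective, so
`Ext^i(-, R)` vanishes for `i > 0`, and since `R` has a nonzero socle every module embeds into its
double dual.

Otherwise `𝔪 ⊄ (a)` for some nonzero `a ∈ 𝔪`, and every nonzero weakly reflexive module `N`
surjects onto `R`: if all functionals on `N` took values in `𝔪`, then `N*` would be a vector space
over the residue field, so some `N* → R` would send a functional `N → (a)` to an element of `𝔪`
outside `(a)`, and no evaluation does that. Splitting off copies of `R` shows that a finitely
generated weakly reflexive module is free.
-/

section Ideal

variable {R : Type*} [CommRing R] {I : Ideal R}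

theorem mul_eq_zero_of_mem_of_sq_eq_bot (hI : I ^ 2 = ⊥) {a b : R} (ha : a ∈ I) (hb : b ∈ I) :
    a * b = 0 := by
  rw [← Ideal.mem_bot, ← hI, pow_two]
  exact Ideal.mul_mem_mul ha hb

theorem smul_top_ne_top_of_isNilpotent {N : Type*} [AddCommGroup N] [Module R N] [Nontrivial N]
    (hI : IsNilpotent I) : I • (⊤ : Submodule R N) ≠ ⊤ := by
  intro h
  obtain ⟨n, hn⟩ := hI
  have pow_smul_top (k : ℕ) : I ^ k • (⊤ : Submodule R N) = ⊤ := by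
    induction k with
    | zero => rw [pow_zero, one_smul]
    | succ k ih => rw [pow_succ, mul_smul, h, ih]
  have top_eq_bot := pow_smul_top n
  rw [hn, zero_smul] at top_eq_bot
  exact bot_ne_top top_eq_bot

theorem exists_linearMap_apply_eq_of_notMem_smul_top [I.IsMaximal]
    {X Y : Type*} [AddCommGroup X] [Module R X] [AddCommGroup Y] [Module R Y]
    {x : X} (hx : x ∉ I • (⊤ : Submodule R X)) {y : Y} (hy : ∀ r ∈ I, r • y = 0) :
    ∃ φ : X →ₗ[R] Y, φ x = y ∧ LinearMap.range φ ≤ Submodule.span R {y} := by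
  let : Field (R ⧸ I) := Ideal.Quotient.field I
  let π := (I • (⊤ : Submodule R X)).mkQ
  have hπx : π x ≠ 0 := by simpa [π] using hx
  obtain ⟨f, -, hf⟩ := LinearMap.exists_extend_of_notMem
    (p := (⊥ : Submodule (R ⧸ I) (X ⧸ I • (⊤ : Submodule R X)))) (V' := R ⧸ I) 0
    (by simpa using hπx) 1
  let q : (R ⧸ I) →ₗ[R] Y := Submodule.liftQ I (LinearMap.toSpanSingleton R Y y) hy
  refine ⟨q ∘ₗ f.restrictScalars R ∘ₗ π, ?_, ?_⟩
  · calc q (f (π x)) = (1 : R) • y := congrArg q hf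
      _ = y := one_smul R y
  · calc LinearMap.range (q ∘ₗ f.restrictScalars R ∘ₗ π) ≤ LinearMap.range q :=
          LinearMap.range_comp_le_range _ _
      _ = LinearMap.range (LinearMap.toSpanSingleton R Y y) := Submodule.range_liftQ _ _ hy
      _ = Submodule.span R {y} := LinearMap.range_toSpanSingleton y

end Ideal

section Splitting

variable {R : Type*} [CommRing R] {M N P : Type*} [AddCommGroup M] [Module R M]
  [AddCommGroup N] [Module R N] [AddCommGroup P] [Module R P]

theorem surjective_dual_eval_of_retract (h : Function.Surjective (Module.Dual.eval R M))
    (i : N →ₗ[R] M) (p : M →ₗ[R] N) (hpi : p ∘ₗ i = LinearMap.id) :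
    Function.Surjective (Module.Dual.eval R N) := by
  intro ω
  obtain ⟨v, hv⟩ := h (ω ∘ₗ i.dualMap)
  refine ⟨p v, LinearMap.ext fun f => ?_⟩
  calc f (p v) = ω (f ∘ₗ p ∘ₗ i) := LinearMap.congr_fun hv (f ∘ₗ p)
    _ = ω f := by rw [hpi, LinearMap.comp_id]

theorem nonempty_linearEquiv_ker_prod [Module.Projective R P] {f : M →ₗ[R] P}
    (hf : Function.Surjective f) : Nonempty (M ≃ₗ[R] LinearMap.ker f × P) := by
  obtain ⟨s, hs⟩ := Module.projective_lifting_property f LinearMap.id hf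
  exact ⟨((LinearMap.exact_subtype_ker_map f).splitSurjectiveEquiv
    (Submodule.injective_subtype _) ⟨s, hs⟩).1⟩

theorem free_of_forall_ker_exists_surjective [Nontrivial R] [Module.Finite R M]
    (h : ∀ (n : ℕ) (f : M →ₗ[R] (Fin n → R)), Function.Surjective f →
      Nontrivial (LinearMap.ker f) → ∃ g : Module.Dual R (LinearMap.ker f), Function.Surjective g) :
    Module.Free R M := by
  by_contra not_free
  have exists_surjective (n : ℕ) : ∃ f : M →ₗ[R] (Fin n → R), Function.Surjective f := by
    induction n with
    | zero => exact ⟨0, Function.surjective_to_subsingleton _⟩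
    | succ n ih =>
      obtain ⟨f, hf⟩ := ih
      have ker_nontrivial : Nontrivial (LinearMap.ker f) := by
        rw [Submodule.nontrivial_iff_ne_bot, Ne, LinearMap.ker_eq_bot]
        exact fun hinj => not_free <| .of_equiv (LinearEquiv.ofBijective f ⟨hinj, hf⟩).symm
      obtain ⟨g, hg⟩ := h n f hf ker_nontrivial
      obtain ⟨e⟩ := nonempty_linearEquiv_ker_prod hf
      let consEquiv := Fin.consLinearEquiv R (fun _ : Fin (n + 1) => R)
      exact ⟨consEquiv.toLinearMap ∘ₗ g.prodMap LinearMap.id ∘ₗ e.toLinearMap,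
        consEquiv.surjective.comp ((hg.prodMap Function.surjective_id).comp e.surjective)⟩
  obtain ⟨k, g, hg⟩ := Module.Finite.exists_fin' R M
  obtain ⟨f, hf⟩ := exists_surjective (k + 1)
  have card_le := card_le_of_surjective R (f ∘ₗ g) (hf.comp hg)
  simp at card_le

end Splitting

theorem baer_of_isPrincipalIdealRing {R : Type*} [CommRing R] [IsPrincipalIdealRing R]
    {Q : Type*} [AddCommGroup Q] [Module R Q]
    (h : ∀ (a : R) (y : Q), (∀ r : R, r * a = 0 → r • y = 0) → ∃ q : Q, a • q = y) :
    Module.Baer R Q := by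
  intro I g
  obtain ⟨a, rfl⟩ := IsPrincipalIdealRing.principal I
  let a' : Submodule.span R {a} := ⟨a, Submodule.mem_span_singleton_self a⟩
  obtain ⟨q, hq⟩ := h a (g a') fun r hr => by
    rw [← map_smul, show r • a' = 0 from Subtype.ext hr, map_zero]
  refine ⟨LinearMap.toSpanSingleton R Q q, fun x hx => ?_⟩
  obtain ⟨c, rfl⟩ := Submodule.mem_span_singleton.1 hx
  calc (c • a) • q = c • g a' := by rw [smul_assoc, hq]
    _ = g ⟨c • a, hx⟩ := (map_smul g c a').symm

section IsLocalRing

open IsLocalRing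

variable {R : Type*} [CommRing R] [IsLocalRing R]

theorem isPrincipalIdealRing_of_maximalIdeal_le_span
    (h : ∀ a ∈ maximalIdeal R, a ≠ 0 → maximalIdeal R ≤ Ideal.span {a}) :
    IsPrincipalIdealRing R where
  principal I := by
    by_cases hI_top : I = ⊤
    · exact hI_top ▸ inferInstance
    by_cases hI_bot : I = ⊥
    · exact hI_bot ▸ inferInstance
    have hI_le : I ≤ maximalIdeal R := le_maximalIdeal hI_top
    obtain ⟨a, haI, ha0⟩ := Submodule.exists_mem_ne_zero_of_ne_bot hI_bot
    exact ⟨a, le_antisymm (hI_le.trans (h a (hI_le haI) ha0))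
      ((Ideal.span_singleton_le_iff_mem I).2 haI)⟩

theorem baer_self_of_maximalIdeal_le_span (hm : maximalIdeal R ^ 2 = ⊥)
    (h : ∀ a ∈ maximalIdeal R, a ≠ 0 → maximalIdeal R ≤ Ideal.span {a}) : Module.Baer R R := by
  have := isPrincipalIdealRing_of_maximalIdeal_le_span h
  refine baer_of_isPrincipalIdealRing fun a y hann => ?_
  suffices a ∣ y from this.imp fun _ hq => hq.symm
  by_cases ha_unit : IsUnit a
  · exact ha_unit.dvd
  by_cases ha0 : a = 0
  · have hy : (1 : R) • y = 0 := hann 1 (by rw [ha0, mul_zero])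
    rw [← one_smul R y, hy]
    exact dvd_zero a
  have ha : a ∈ maximalIdeal R := ha_unit
  have hay : a * y = 0 := hann a (mul_eq_zero_of_mem_of_sq_eq_bot hm ha ha)
  have hy : y ∈ maximalIdeal R := fun hu => ha0 (hu.mul_left_eq_zero.1 hay)
  exact Ideal.mem_span_singleton.1 (h a ha ha0 hy)

theorem exists_ne_zero_forall_mem_maximalIdeal_mul_eq_zero (hm : maximalIdeal R ^ 2 = ⊥) :
    ∃ s : R, s ≠ 0 ∧ ∀ r ∈ maximalIdeal R, r * s = 0 := by
  by_cases hbot : maximalIdeal R = ⊥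
  · exact ⟨1, one_ne_zero, fun r hr => by simpa [hbot] using hr⟩
  · obtain ⟨s, hs, hs0⟩ := Submodule.exists_mem_ne_zero_of_ne_bot hbot
    exact ⟨s, hs0, fun r hr => mul_eq_zero_of_mem_of_sq_eq_bot hm hr hs⟩

theorem injective_dual_eval_of_baer (hR : Module.Baer R R) {s : R} (hs0 : s ≠ 0)
    (hs : ∀ r ∈ maximalIdeal R, r * s = 0) {M : Type*} [AddCommGroup M] [Module R M] :
    Function.Injective (Module.Dual.eval R M) := by
  rw [injective_iff_map_eq_zero]
  intro v hv
  by_contra hv0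
  let t := LinearMap.toSpanSingleton R M v
  have ker_le : LinearMap.ker t ≤ LinearMap.ker (LinearMap.toSpanSingleton R R s) := fun r hr =>
    hs r fun hu => hv0 (hu.smul_eq_zero.1 hr)
  obtain ⟨f, hf⟩ := hR.extension_property ((LinearMap.ker t).liftQ t le_rfl)
    (LinearMap.ker_eq_bot.1 (Submodule.ker_liftQ_eq_bot _ _ _ le_rfl))
    ((LinearMap.ker t).liftQ (LinearMap.toSpanSingleton R R s) ker_le)
  have hfv : f v = s := by
    have h1 : f ((1 : R) • v) = (1 : R) • s := LinearMap.congr_fun hf (Submodule.Quotient.mk 1)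
    rwa [one_smul, one_smul] at h1
  exact hs0 (hfv.symm.trans (LinearMap.congr_fun hv f))

variable {a : R}

theorem exists_surjective_dual_of_not_maximalIdeal_le_span (hm : maximalIdeal R ^ 2 = ⊥)
    (ha : a ∈ maximalIdeal R) (ha0 : a ≠ 0) (hspan : ¬ maximalIdeal R ≤ Ideal.span {a})
    {N : Type*} [AddCommGroup N] [Module R N] [Nontrivial N]
    (hN : Function.Surjective (Module.Dual.eval R N)) :
    ∃ f : Module.Dual R N, Function.Surjective f := by
  by_contra! not_surjective
  have range_le (f : Module.Dual R N) : LinearMap.range f ≤ maximalIdeal R :=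
    le_maximalIdeal fun htop => not_surjective f (LinearMap.range_eq_top.1 htop)
  have smul_dual_eq_bot : maximalIdeal R • (⊤ : Submodule R (Module.Dual R N)) = ⊥ := by
    refine eq_bot_iff.2 (Submodule.smul_le.2 fun r hr f _ => LinearMap.ext fun w => ?_)
    exact mul_eq_zero_of_mem_of_sq_eq_bot hm hr (range_le f ⟨w, rfl⟩)
  obtain ⟨b, hb, hb_span⟩ := SetLike.not_le_iff_exists.1 hspan
  obtain ⟨v, -, hv⟩ := SetLike.exists_of_lt
    (smul_top_ne_top_of_isNilpotent (N := N) ⟨2, hm⟩).lt_top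
  obtain ⟨f, hfv, hf_range⟩ := exists_linearMap_apply_eq_of_notMem_smul_top hv
    fun r hr => mul_eq_zero_of_mem_of_sq_eq_bot hm hr ha
  have hf0 : f ≠ 0 := fun hf => ha0 (by rw [← hfv, hf, LinearMap.zero_apply])
  obtain ⟨ω, hω, -⟩ := exists_linearMap_apply_eq_of_notMem_smul_top
    (show f ∉ maximalIdeal R • ⊤ by rwa [smul_dual_eq_bot])
    fun r hr => mul_eq_zero_of_mem_of_sq_eq_bot hm hr hb
  obtain ⟨w, rfl⟩ := hN ω
  exact hb_span (hω ▸ hf_range ⟨w, rfl⟩)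

theorem free_of_surjective_dual_eval_of_not_maximalIdeal_le_span (hm : maximalIdeal R ^ 2 = ⊥)
    (ha : a ∈ maximalIdeal R) (ha0 : a ≠ 0) (hspan : ¬ maximalIdeal R ≤ Ideal.span {a})
    {M : Type*} [AddCommGroup M] [Module R M] [Module.Finite R M]
    (hM : Function.Surjective (Module.Dual.eval R M)) : Module.Free R M := by
  refine free_of_forall_ker_exists_surjective fun n f hf _ => ?_
  obtain ⟨e⟩ := nonempty_linearEquiv_ker_prod hf
  have ker_surjective_eval : Function.Surjective (Module.Dual.eval R (LinearMap.ker f)) :=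
    surjective_dual_eval_of_retract hM (e.symm.toLinearMap ∘ₗ LinearMap.inl R _ _)
      (LinearMap.fst R _ _ ∘ₗ e.toLinearMap) (by ext; simp)
  exact exists_surjective_dual_of_not_maximalIdeal_le_span hm ha ha0 hspan ker_surjective_eval

end IsLocalRing

theorem isZero_Ext_succ_of_injective {R : Type*} [Ring R] {C : Type*} [Category* C] [Abelian C]
    [Linear R C] [EnoughProjectives C] (X Y : C) [Injective Y] (n : ℕ) :
    Limits.IsZero (((Ext R C (n + 1)).obj (Opposite.op X)).obj Y) := by
  let P := ProjectiveResolution.of X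
  refine Limits.IsZero.of_iso ?_ (P.isoExt (n + 1) Y)
  rw [← HomologicalComplex.exactAt_iff_isZero_homology,
    HomologicalComplex.exactAt_iff' _ n (n + 1) (n + 2) (by simp) (by simp),
    ShortComplex.moduleCat_exact_iff]
  intro (x : P.complex.X (n + 1) ⟶ Y) (hx : P.complex.d (n + 2) (n + 1) ≫ x = 0)
  exact ⟨(P.exact_succ n).descToInjective x hx, (P.exact_succ n).comp_descToInjective x hx⟩

theorem stmt1_general (R : Type u) [CommRing R] [IsLocalRing R]
    (hm : IsLocalRing.maximalIdeal R ^ 2 = ⊥)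
    (M : Type u) [AddCommGroup M] [Module R M] [Module.Finite R M]
    (hwr : Function.Surjective (Module.Dual.eval R M)) :
    Module.IsReflexive R M ∧
      (∀ i : ℕ, 0 < i →
        Subsingleton (((Ext R (ModuleCat R) i).obj
          (Opposite.op (ModuleCat.of R M))).obj (ModuleCat.of R R))) ∧
      (∀ i : ℕ, 0 < i →
        Subsingleton (((Ext R (ModuleCat R) i).obj
          (Opposite.op (ModuleCat.of R (Module.Dual R M)))).obj (ModuleCat.of R R))) := by
  by_cases hspan : ∀ a ∈ IsLocalRing.maximalIdeal R, a ≠ 0 →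
      IsLocalRing.maximalIdeal R ≤ Ideal.span {a}
  · have baer : Module.Baer R R := baer_self_of_maximalIdeal_le_span hm hspan
    have : Module.Injective R R := baer.injective
    have : Injective (ModuleCat.of R R) := Module.injective_object_of_injective_module R R
    obtain ⟨s, hs0, hs⟩ := exists_ne_zero_forall_mem_maximalIdeal_mul_eq_zero hm
    exact ⟨⟨injective_dual_eval_of_baer baer hs0 hs, hwr⟩,
      fun | i + 1, _ => ModuleCat.subsingleton_of_isZero (isZero_Ext_succ_of_injective _ _ i),
      fun | i + 1, _ => ModuleCat.subsingleton_of_isZero (isZero_Ext_succ_of_injective _ _ i)⟩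
  · push Not at hspan
    obtain ⟨a, ha, ha0, hspan⟩ := hspan
    have := free_of_surjective_dual_eval_of_not_maximalIdeal_le_span hm ha ha0 hspan hwr
    have : Projective (ModuleCat.of R M) := (IsProjective.iff_projective M).1 inferInstance
    have : Projective (ModuleCat.of R (Module.Dual R M)) :=
      (IsProjective.iff_projective (Module.Dual R M)).1 inferInstance
    exact ⟨inferInstance,
      fun | i + 1, _ => ModuleCat.subsingleton_of_isZero (isZero_Ext_succ_of_projective _ _ i),
      fun | i + 1, _ => ModuleCat.subsingleton_of_isZero (isZero_Ext_succ_of_projective _ _ i)⟩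

/-- Let `(R,𝔪)` be a noetherian local ring with `𝔪² = 0` and let `M` be a
finitely generated weakly reflexive `R`-module (the evaluation map `M → M**` is surjective).
Then `M` is totally reflexive: `M` is reflexive and `Ext^i_R(M,R) = 0` and
`Ext^i_R(M*,R) = 0` for all `i > 0`. -/
theorem stmt1 (R : Type u) [CommRing R] [IsNoetherianRing R] [IsLocalRing R]
    (hm : IsLocalRing.maximalIdeal R ^ 2 = ⊥)
    (M : Type u) [AddCommGroup M] [Module R M] [Module.Finite R M]
    (hwr : Function.Surjective (Module.Dual.eval R M)) :
    Module.IsReflexive R M ∧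
      (∀ i : ℕ, 0 < i →
        Subsingleton (((Ext R (ModuleCat R) i).obj
          (Opposite.op (ModuleCat.of R M))).obj (ModuleCat.of R R))) ∧
      (∀ i : ℕ, 0 < i →
        Subsingleton (((Ext R (ModuleCat R) i).obj
          (Opposite.op (ModuleCat.of R (Module.Dual R M)))).obj (ModuleCat.of R R))) :=
  stmt1_general R hm M hwr
end

section
/- Let (A,𝔫) be a regular local ring of dimension n ≥ 2 and let f ∈ 𝔫 be nonzero. Let R = A/(f·𝔫), where f·𝔫 denotes the product of the principal ideal (f) with the maximal ideal 𝔫. Then the principal ideal fR of R (generated by the image of f) is a reflexive R-module which is not free. -/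
/-!
Let `f` be a nonzerodivisor in an ideal `I`, let `R = A/fI` and let `g` be the image of `f`.
Since `I` kills `g`, an element of `R` killed by the annihilator of `g` lifts to some `r` with
`rI ⊆ fA`. If `I` contains a regular sequence `x, y`, this forces `f ∣ r`: writing `xr = fa` and
`yr = fb` gives `ya = xb`, so `x ∣ a`. Hence `gR` is its own double annihilator, its dual is
generated by the inclusion `gR → R`, and `gR` is reflexive. It is not free because `g ≠ 0` kills it.

A regular local ring `A` is a domain, by induction on the dimension: prime avoidance gives
`x ∈ 𝔫 ∖ 𝔫²` outside all minimal primes, `A/(x)` is again regular, so `(x)` is prime, and a minimal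
prime `p ⊆ (x)` satisfies `p = xp`, that is `p = 0`. Thus every `x ∈ 𝔫 ∖ 𝔫²` is a prime element, and
in dimension at least two any `y ∈ 𝔫 ∖ (x)` completes it to a regular sequence.
-/

open IsLocalRing nonZeroDivisors RingTheory.Sequence

section PrincipalIdeal

variable {R : Type*} [CommRing R] {g : R}

theorem exists_smul_subtype_eq_of_annihilator_annihilator_le
    (hg : (Ideal.span {g}).annihilator.annihilator ≤ Ideal.span {g})
    (φ : Module.Dual R (Ideal.span {g})) : ∃ b : R, b • (Ideal.span {g}).subtype = φ := by
  let γ : Ideal.span {g} := ⟨g, Ideal.mem_span_singleton_self g⟩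
  have hφγ : φ γ ∈ Ideal.span {g} := by
    refine hg (Submodule.mem_annihilator.mpr fun a ha ↦ ?_)
    have haγ : a • γ = 0 := Subtype.ext ((Submodule.mem_annihilator_span_singleton g a).mp ha)
    rw [smul_eq_mul, mul_comm, ← smul_eq_mul, ← map_smul, haγ, map_zero]
  obtain ⟨b, hb⟩ := Ideal.mem_span_singleton'.mp hφγ
  refine ⟨b, LinearMap.ext fun ⟨z, hz⟩ ↦ ?_⟩
  obtain ⟨c, rfl⟩ := Ideal.mem_span_singleton'.mp hz
  calc b * (c * g) = c * φ γ := by rw [← hb]; ring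
    _ = φ (c • γ) := (map_smul φ c γ).symm

theorem isReflexive_span_singleton_of_annihilator_annihilator_le
    (hg : (Ideal.span {g}).annihilator.annihilator ≤ Ideal.span {g}) :
    Module.IsReflexive R (Ideal.span {g}) := by
  refine ⟨fun z w h ↦ Subtype.ext (LinearMap.congr_fun h (Ideal.span {g}).subtype), fun Ψ ↦ ?_⟩
  have hΨ : Ψ (Ideal.span {g}).subtype ∈ Ideal.span {g} := by
    refine hg (Submodule.mem_annihilator.mpr fun a ha ↦ ?_)
    have ha0 : a • (Ideal.span {g}).subtype = 0 :=
      LinearMap.ext fun z ↦ Submodule.mem_annihilator.mp ha z z.2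
    rw [smul_eq_mul, mul_comm, ← smul_eq_mul, ← map_smul, ha0, map_zero]
  refine ⟨⟨_, hΨ⟩, LinearMap.ext fun φ ↦ ?_⟩
  obtain ⟨b, rfl⟩ := exists_smul_subtype_eq_of_annihilator_annihilator_le hg φ
  exact (map_smul Ψ b _).symm

theorem not_free_span_singleton_of_mul_self_eq_zero (hg : g ≠ 0) (hgg : g * g = 0) :
    ¬ Module.Free R (Ideal.span {g}) := by
  intro
  have : Nontrivial (Ideal.span {g}) :=
    Submodule.nontrivial_iff_ne_bot.mpr (Ideal.span_singleton_eq_bot.not.mpr hg)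
  have hann : g ∈ (Ideal.span {g}).annihilator :=
    (Submodule.mem_annihilator_span_singleton g g).mpr hgg
  rw [Submodule.annihilator, Module.annihilator_eq_bot.mpr inferInstance] at hann
  exact hg hann

end PrincipalIdeal

section WeaklyRegularPair

variable {R : Type*} [CommRing R] {x y f : R}

theorem isWeaklyRegular_pair_iff :
    IsWeaklyRegular R [x, y] ↔ IsSMulRegular R x ∧ ∀ r, x ∣ y * r → x ∣ r := by
  rw [← List.singleton_append, isWeaklyRegular_append_iff, isWeaklyRegular_singleton_iff,
    isWeaklyRegular_singleton_iff, isSMulRegular_quotient_iff_mem_of_smul_mem]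
  simp only [Ideal.ofList_singleton, smul_eq_mul, Ideal.mul_top, Ideal.mem_span_singleton]

theorem dvd_of_isWeaklyRegular_pair_of_dvd_mul_of_dvd_mul (hxy : IsWeaklyRegular R [x, y])
    (hf : f ∈ R⁰) {r : R} (hxr : f ∣ x * r) (hyr : f ∣ y * r) : f ∣ r := by
  obtain ⟨hx, hy⟩ := isWeaklyRegular_pair_iff.mp hxy
  obtain ⟨a, ha⟩ := hxr
  obtain ⟨b, hb⟩ := hyr
  have hab : y * a = x * b :=
    (mul_cancel_left_mem_nonZeroDivisors hf).mp (by linear_combination x * hb - y * ha)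
  obtain ⟨c, rfl⟩ := hy a ⟨b, hab⟩
  exact ⟨c, hx (by linear_combination ha)⟩

end WeaklyRegularPair

section MinimalGenerators

variable {R : Type*} [CommRing R] [IsLocalRing R]

theorem exists_span_insert_erase_eq_of_notMem_smul {M : Type*} [AddCommGroup M] [Module R M]
    [DecidableEq M] {s : Finset M} {x : M} (hx : x ∈ Submodule.span R (s : Set M))
    (hx' : x ∉ maximalIdeal R • Submodule.span R (s : Set M)) :
    ∃ i ∈ s, Submodule.span R (insert x (s.erase i : Set M)) = Submodule.span R (s : Set M) := by
  obtain ⟨c, -, hc⟩ := Submodule.mem_span_finset.mp hx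
  obtain ⟨i, hi, hci⟩ : ∃ i ∈ s, c i ∉ maximalIdeal R := by
    by_contra! h
    exact hx' (hc ▸ Submodule.sum_mem _ fun i hi ↦
      Submodule.smul_mem_smul (h i hi) (Submodule.subset_span hi))
  refine ⟨i, hi, le_antisymm ?_ ?_⟩
  · exact Submodule.span_le.mpr (Set.insert_subset hx
      ((Finset.coe_subset.mpr (s.erase_subset i)).trans Submodule.subset_span))
  have mem_of_mem_erase : ∀ j ∈ s.erase i,
      j ∈ Submodule.span R (insert x (s.erase i : Set M)) :=
    fun j hj ↦ Submodule.subset_span (Set.mem_insert_of_mem x hj)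
  have hi_mem : c i • i ∈ Submodule.span R (insert x (s.erase i : Set M)) := by
    rw [← Finset.add_sum_erase s _ hi] at hc
    rw [eq_sub_of_add_eq hc]
    exact Submodule.sub_mem _ (Submodule.subset_span (Set.mem_insert x _))
      (Submodule.sum_mem _ fun j hj ↦ Submodule.smul_mem _ _ (mem_of_mem_erase j hj))
  refine Submodule.span_le.mpr fun j hj ↦ ?_
  obtain rfl | hji := eq_or_ne j i
  · exact (Submodule.smul_mem_iff_of_isUnit _ (notMem_maximalIdeal.mp hci)).mp hi_mem
  · exact mem_of_mem_erase j (Finset.mem_erase.mpr ⟨hji, hj⟩)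

theorem spanFinrank_map_quotient_span_singleton_add_one_le {I : Ideal R} (hI : I.FG) {x : R}
    (hx : x ∈ I) (hx' : x ∉ maximalIdeal R * I) :
    (I.map (Ideal.Quotient.mk (Ideal.span {x}))).spanFinrank + 1 ≤ I.spanFinrank := by
  classical
  obtain ⟨s, hcard, rfl⟩ := Submodule.FG.exists_span_finset_card_eq_spanFinrank hI
  obtain ⟨i, hi, hspan⟩ := exists_span_insert_erase_eq_of_notMem_smul hx hx'
  have hmap : Ideal.map (Ideal.Quotient.mk (Ideal.span {x})) (Submodule.span R (s : Set R)) =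
      Ideal.span ((s.erase i).image (Ideal.Quotient.mk (Ideal.span {x})) : Set _) := by
    rw [← hspan, ← Ideal.span, Ideal.map_span, Set.image_insert_eq,
      Ideal.Quotient.mk_singleton_self, Ideal.span_insert_zero, Finset.coe_image]
  have hle : (Ideal.map (Ideal.Quotient.mk (Ideal.span {x}))
      (Submodule.span R (s : Set R))).spanFinrank ≤ (s.erase i).card := by
    rw [hmap]
    refine (Submodule.spanFinrank_span_le_ncard_of_finite (Finset.finite_toSet _)).trans ?_
    rw [Set.ncard_coe_finset]
    exact Finset.card_image_le
  rw [← hcard, ← Finset.card_erase_add_one hi]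
  exact Nat.add_le_add_right hle 1

end MinimalGenerators

section PrimeIdeals

variable {R : Type*} [CommRing R]

theorem exists_mem_notMem_of_finite_isPrime {S : Set (Ideal R)} (hS : S.Finite)
    (hprime : ∀ p ∈ S, p.IsPrime) {I J : Ideal R} (hIJ : ¬ I ≤ J) (hIS : ∀ p ∈ S, ¬ I ≤ p) :
    ∃ x ∈ I, x ∉ J ∧ ∀ p ∈ S, x ∉ p := by
  have hcover := (Ideal.subset_union_prime_finite (f := id) (I := I) (hS.insert J) J J
    fun p hp hpJ _ ↦ hprime p (hp.resolve_left hpJ)).not.mpr (by simpa using ⟨hIJ, hIS⟩)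
  obtain ⟨x, hxI, hx⟩ := Set.not_subset.mp hcover
  exact ⟨x, hxI, by simpa using hx⟩

theorem isDomain_of_isPrime_span_singleton [IsNoetherianRing R] {x : R}
    (hx : x ∈ Ideal.jacobson (⊥ : Ideal R)) (hprime : (Ideal.span {x}).IsPrime)
    (hmin : ∀ p ∈ minimalPrimes R, x ∉ p) : IsDomain R := by
  obtain ⟨p, hp, hpx⟩ := Ideal.exists_minimalPrimes_le (bot_le (a := Ideal.span {x}))
  have hpp : p.IsPrime := hp.1.1
  have hle : p ≤ Ideal.span {x} • p := by
    intro y hy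
    obtain ⟨a, rfl⟩ := Ideal.mem_span_singleton.mp (hpx hy)
    exact Ideal.mul_mem_mul (Ideal.mem_span_singleton_self x)
      ((hpp.mem_or_mem hy).resolve_left (hmin p hp))
  have hp0 : p = ⊥ := Submodule.eq_bot_of_le_smul_of_le_jacobson_bot _ p
    (IsNoetherian.noetherian p) hle ((Ideal.span_singleton_le_iff_mem _).mpr hx)
  exact @IsDomain.of_bot_isPrime R _ (hp0 ▸ hpp)

end PrimeIdeals

section RegularLocalRing

theorem not_maximalIdeal_le_sq {R : Type*} [CommRing R] [IsLocalRing R] [IsNoetherianRing R]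
    (h : maximalIdeal R ≠ ⊥) : ¬ maximalIdeal R ≤ maximalIdeal R ^ 2 := by
  intro hle
  have hidem : IsIdempotentElem (maximalIdeal R) :=
    le_antisymm Ideal.mul_le_left (hle.trans_eq (pow_two _))
  exact ((Ideal.isIdempotentElem_iff_eq_bot_or_top_of_isLocalRing _).mp
    hidem).elim h Ideal.IsPrime.ne_top'

theorem isRegularLocalRing_of_span_eq_maximalIdeal {R : Type*} [CommRing R] [IsLocalRing R]
    [IsNoetherianRing R] (s : Finset R) (hs : Ideal.span (s : Set R) = maximalIdeal R)
    (hcard : s.card ≤ ringKrullDim R) : IsRegularLocalRing R := by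
  refine .of_spanFinrank_maximalIdeal_le R (le_trans ?_ hcard)
  rw [← hs, ← Set.ncard_coe_finset]
  exact_mod_cast Submodule.spanFinrank_span_le_ncard_of_finite s.finite_toSet

theorem isRegularLocalRing_quotient_span_singleton {R : Type*} [CommRing R] [IsRegularLocalRing R]
    {x : R} (hx : x ∈ maximalIdeal R) (hx' : x ∉ maximalIdeal R ^ 2) :
    IsRegularLocalRing (R ⧸ Ideal.span {x}) := by
  have : Nontrivial (R ⧸ Ideal.span {x}) := Ideal.Quotient.nontrivial_iff.mpr
    (Ideal.span_singleton_eq_top.not.mpr hx)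
  have : IsLocalRing (R ⧸ Ideal.span {x}) := .of_surjective' _ Ideal.Quotient.mk_surjective
  have hgen := spanFinrank_map_quotient_span_singleton_add_one_le
    (IsNoetherian.noetherian (maximalIdeal R)) hx (pow_two (maximalIdeal R) ▸ hx')
  rw [map_maximalIdeal_of_surjective _ Ideal.Quotient.mk_surjective] at hgen
  have hdim := Ideal.height_le_ringKrullDim_quotient_add_one hx
  rw [maximalIdeal_height_eq_ringKrullDim, ← IsRegularLocalRing.spanFinrank_maximalIdeal] at hdim
  refine .of_spanFinrank_maximalIdeal_le _ (ENat.WithBot.add_le_add_one_right_iff.mp ?_)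
  exact le_trans (mod_cast hgen) hdim

theorem maximalIdeal_notMem_minimalPrimes {R : Type*} [CommRing R] [IsRegularLocalRing R]
    (h : maximalIdeal R ≠ ⊥) : maximalIdeal R ∉ minimalPrimes R := by
  intro hmin
  have hdim := IsRegularLocalRing.spanFinrank_maximalIdeal (R := R)
  rw [← maximalIdeal_height_eq_ringKrullDim, Ideal.height_eq_zero_iff.mpr hmin] at hdim
  have hrank : (maximalIdeal R).spanFinrank = 0 := mod_cast hdim
  exact h ((Submodule.spanFinrank_eq_zero_iff_eq_bot (IsNoetherian.noetherian _)).mp hrank)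

theorem isDomain_of_isRegularLocalRing (R : Type*) [CommRing R] [IsRegularLocalRing R] :
    IsDomain R := by
  induction hd : (maximalIdeal R).spanFinrank using Nat.strong_induction_on generalizing R with
  | h d ih =>
    by_cases hbot : maximalIdeal R = ⊥
    · exact (isField_iff_maximalIdeal_eq.mpr hbot).isDomain
    have hminimal : ∀ p ∈ minimalPrimes R, ¬ maximalIdeal R ≤ p := by
      intro p hp hle
      have hpm : p = maximalIdeal R := (le_maximalIdeal hp.1.1.ne_top).antisymm hle
      exact maximalIdeal_notMem_minimalPrimes hbot (hpm ▸ hp)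
    obtain ⟨x, hx, hx', hxp⟩ := exists_mem_notMem_of_finite_isPrime
      (minimalPrimes.finite_of_isNoetherianRing R) (fun p hp ↦ hp.1.1)
      (not_maximalIdeal_le_sq hbot) hminimal
    have := isRegularLocalRing_quotient_span_singleton hx hx'
    have hlt := spanFinrank_map_quotient_span_singleton_add_one_le
      (IsNoetherian.noetherian (maximalIdeal R)) hx (pow_two (maximalIdeal R) ▸ hx')
    rw [map_maximalIdeal_of_surjective _ Ideal.Quotient.mk_surjective, hd] at hlt
    exact isDomain_of_isPrime_span_singleton
      (jacobson_eq_maximalIdeal (⊥ : Ideal R) bot_ne_top ▸ hx)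
      ((Ideal.Quotient.isDomain_iff_prime _).mp (ih _ hlt _ rfl)) hxp

theorem prime_of_mem_maximalIdeal_of_notMem_sq {R : Type*} [CommRing R] [IsRegularLocalRing R]
    {x : R} (hx : x ∈ maximalIdeal R) (hx' : x ∉ maximalIdeal R ^ 2) : Prime x := by
  have := isRegularLocalRing_quotient_span_singleton hx hx'
  have hx0 : x ≠ 0 := fun h ↦ hx' (h ▸ zero_mem _)
  exact (Ideal.span_singleton_prime hx0).mp
    ((Ideal.Quotient.isDomain_iff_prime _).mp (isDomain_of_isRegularLocalRing _))

theorem exists_isWeaklyRegular_pair_of_two_le_ringKrullDim {R : Type*} [CommRing R]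
    [IsRegularLocalRing R] (hdim : 2 ≤ ringKrullDim R) :
    ∃ x ∈ maximalIdeal R, ∃ y ∈ maximalIdeal R, IsWeaklyRegular R [x, y] := by
  have := isDomain_of_isRegularLocalRing R
  have hrank : 2 ≤ (maximalIdeal R).spanFinrank :=
    mod_cast hdim.trans (ringKrullDim_le_spanFinrank_maximalIdeal R)
  have hbot : maximalIdeal R ≠ ⊥ := by
    intro h
    rw [h, Submodule.spanFinrank_bot] at hrank
    omega
  obtain ⟨x, hx, hx'⟩ := SetLike.not_le_iff_exists.mp (not_maximalIdeal_le_sq hbot)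
  have hxprime := prime_of_mem_maximalIdeal_of_notMem_sq hx hx'
  obtain ⟨y, hy, hyx⟩ : ∃ y ∈ maximalIdeal R, y ∉ Ideal.span {x} := by
    refine SetLike.not_le_iff_exists.mp fun hle ↦ ?_
    have hspan := hle.antisymm ((Ideal.span_singleton_le_iff_mem _).mpr hx)
    rw [hspan, Ideal.span, Submodule.spanFinrank_singleton hxprime.ne_zero] at hrank
    omega
  rw [Ideal.mem_span_singleton] at hyx
  exact ⟨x, hx, y, hy, isWeaklyRegular_pair_iff.mpr
    ⟨.of_ne_zero hxprime.ne_zero, fun r hr ↦ (hxprime.dvd_or_dvd hr).resolve_left hyx⟩⟩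

end RegularLocalRing

section GradeTwo

variable {A : Type*} [CommRing A] {I : Ideal A} {x y f : A}

theorem annihilator_annihilator_span_mk_le (hx : x ∈ I) (hy : y ∈ I)
    (hxy : IsWeaklyRegular A [x, y]) (hf : f ∈ A⁰) :
    (Ideal.span {Ideal.Quotient.mk (Ideal.span {f} * I) f}).annihilator.annihilator ≤
      Ideal.span {Ideal.Quotient.mk (Ideal.span {f} * I) f} := by
  intro c hc
  obtain ⟨r, rfl⟩ := Ideal.Quotient.mk_surjective c
  have dvd_mul_of_mem : ∀ a ∈ I, f ∣ a * r := by
    intro a ha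
    have hann : Ideal.Quotient.mk (Ideal.span {f} * I) a ∈
        (Ideal.span {Ideal.Quotient.mk (Ideal.span {f} * I) f}).annihilator := by
      rw [Ideal.span, Submodule.mem_annihilator_span_singleton, smul_eq_mul, ← map_mul,
        Ideal.Quotient.eq_zero_iff_mem, mul_comm a]
      exact Ideal.mul_mem_mul (Ideal.mem_span_singleton_self f) ha
    have har : a * r ∈ Ideal.span {f} * I := by
      rw [mul_comm a, ← Ideal.Quotient.eq_zero_iff_mem, map_mul]
      exact Submodule.mem_annihilator.mp hc _ hann
    exact Ideal.mem_span_singleton.mp (Ideal.mul_le_left har)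
  rw [Ideal.mem_span_singleton]
  exact map_dvd _ (dvd_of_isWeaklyRegular_pair_of_dvd_mul_of_dvd_mul hxy hf
    (dvd_mul_of_mem x hx) (dvd_mul_of_mem y hy))

theorem notMem_span_singleton_mul_self (hI : I ≠ ⊤) (hf : f ∈ A⁰) : f ∉ Ideal.span {f} * I := by
  rw [Ideal.mem_span_singleton_mul]
  rintro ⟨a, ha, hfa⟩
  have : a = 1 := (mul_cancel_left_mem_nonZeroDivisors hf).mp (by rw [hfa, mul_one])
  exact hI (I.eq_top_iff_one.mpr (this ▸ ha))

theorem stmt10_general (hI : I ≠ ⊤) (hx : x ∈ I) (hy : y ∈ I) (hxy : IsWeaklyRegular A [x, y])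
    (hfI : f ∈ I) (hf : f ∈ A⁰) :
    Module.IsReflexive (A ⧸ (Ideal.span {f} * I))
      (Ideal.span {Ideal.Quotient.mk (Ideal.span {f} * I) f}) ∧
    ¬ Module.Free (A ⧸ (Ideal.span {f} * I))
      (Ideal.span {Ideal.Quotient.mk (Ideal.span {f} * I) f}) := by
  refine ⟨isReflexive_span_singleton_of_annihilator_annihilator_le
    (annihilator_annihilator_span_mk_le hx hy hxy hf),
    not_free_span_singleton_of_mul_self_eq_zero ?_ ?_⟩
  · exact Ideal.Quotient.eq_zero_iff_mem.not.mpr (notMem_span_singleton_mul_self hI hf)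
  · rw [← map_mul, Ideal.Quotient.eq_zero_iff_mem]
    exact Ideal.mul_mem_mul (Ideal.mem_span_singleton_self f) hfI

end GradeTwo

/-- Let `(A,𝔫)` be a regular local ring of dimension `n ≥ 2` (regular:
the maximal ideal `𝔫` is generated by `n` elements where `n` is the Krull dimension) and
let `f ∈ 𝔫` be nonzero. Let `R = A/(f·𝔫)`. Then the principal ideal `fR` of `R`
(generated by the image of `f`) is a reflexive `R`-module which is not free. -/
theorem stmt10 (A : Type u) [CommRing A] [IsLocalRing A] [IsNoetherianRing A]
    (n : ℕ) (hn : 2 ≤ n) (hdim : ringKrullDim A = n)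
    (hreg : ∃ s : Finset A, Ideal.span (s : Set A) = IsLocalRing.maximalIdeal A ∧
      s.card = n)
    (f : A) (hf : f ∈ IsLocalRing.maximalIdeal A) (hf0 : f ≠ 0) :
    Module.IsReflexive (A ⧸ (Ideal.span {f} * IsLocalRing.maximalIdeal A))
      (Ideal.span {Ideal.Quotient.mk (Ideal.span {f} * IsLocalRing.maximalIdeal A) f}) ∧
    ¬ Module.Free (A ⧸ (Ideal.span {f} * IsLocalRing.maximalIdeal A))
      (Ideal.span {Ideal.Quotient.mk (Ideal.span {f} * IsLocalRing.maximalIdeal A) f}) := by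
  obtain ⟨s, hs, hcard⟩ := hreg
  have : IsRegularLocalRing A :=
    isRegularLocalRing_of_span_eq_maximalIdeal s hs (by rw [hcard, hdim])
  have : IsDomain A := isDomain_of_isRegularLocalRing A
  obtain ⟨x, hx, y, hy, hxy⟩ :=
    exists_isWeaklyRegular_pair_of_two_le_ringKrullDim (R := A) (hdim ▸ mod_cast hn)
  exact stmt10_general Ideal.IsPrime.ne_top' hx hy hxy hf (mem_nonZeroDivisors_of_ne_zero hf0)
end

section
/- Let (R,𝔪,k) be a noetherian local ring which is eventually BNSI, i.e., there exists ℓ ≥ 1 such that for every finitely generated non-free R-module M and every i > ℓ one has β_i(M) > β_{i-1}(M). Then every finitely generated totally reflexive R-module is free. -/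
open CategoryTheory

/-- The `i`-th Betti number of the `R`-module `M` over the local ring `R`: the length of
the `R`-module `Tor_i^R(k, M)` where `k` is the residue field of `R`. (The length of a
module is the Krull dimension of its lattice of submodules, valued in `WithBot ℕ∞`.) -/
noncomputable def bettiNumber (R : Type u) [CommRing R] [IsLocalRing R]
    (M : Type u) [AddCommGroup M] [Module R M] (i : ℕ) : WithBot ℕ∞ :=
  Order.krullDim (Submodule R
    (((Tor (ModuleCat R) i).obj
      (ModuleCat.of R (IsLocalRing.ResidueField R))).obj (ModuleCat.of R M)))

/-!
Let `ℓ` be such that `β_{i-1}(N) < β_i(N)` for all `i > ℓ` and all finitely generated non-free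
`N`. If `Ext^i(M, R) = 0` for all `i > 0` and `0 → K → F → M → 0` is exact with `F` finite free,
then `K` has the same vanishing property, and `0 → M* → F* → K* → 0` is exact, so that
`β_{n+2}(K*) = β_{n+1}(M*)`. If `M*` were not free, neither would `K*` be, and
`β_{ℓ+1}(K*) < β_{ℓ+2}(K*) = β_{ℓ+1}(M*)`; this cannot be iterated forever, so `M*` is free.
Now `K*` is free for the same reason, hence the dual sequence splits and `F → M**` is
surjective; in particular `M → M**` is surjective, and so is `K → K**`. Comparing
`K → F → M` with the exact sequence `K** → F → M**` shows that `M → M**` is injective as well,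
and `M ≅ M**` is free.
-/

section Splice

open Limits

variable {C : Type*} [Category* C] [Abelian C]

/-- The augmentation `P₀ ⟶ X` of a projective resolution `P` of `X`: the map `P.π.f 0`, whose
target is only definitionally equal to `X`, with its target spelled as `X`. -/
noncomputable def augmentation {X : C} (P : ProjectiveResolution X) : P.complex.X 0 ⟶ X :=
  P.π.f 0

instance epi_augmentation {X : C} (P : ProjectiveResolution X) : Epi (augmentation P) :=
  inferInstanceAs (Epi (P.π.f 0))

lemma d_comp_augmentation {X : C} (P : ProjectiveResolution X) :
    P.complex.d 1 0 ≫ augmentation P = 0 :=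
  P.complex_d_comp_π_f_zero

lemma exact_d_augmentation {X : C} (P : ProjectiveResolution X) :
    (ShortComplex.mk _ _ (d_comp_augmentation P)).Exact :=
  P.exact₀

variable {S : ShortComplex C}

lemma d_comp_augmentation_comp (P : ProjectiveResolution S.X₁) :
    P.complex.d 1 0 ≫ augmentation P ≫ S.f = 0 := by
  rw [← Category.assoc, d_comp_augmentation, zero_comp]

lemma augmentation_comp_comp (P : ProjectiveResolution S.X₁) :
    (augmentation P ≫ S.f) ≫ S.g = 0 := by
  rw [Category.assoc, S.zero, comp_zero]

lemma exact_d_augmentation_comp [Mono S.f] (P : ProjectiveResolution S.X₁) :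
    (ShortComplex.mk _ _ (d_comp_augmentation_comp P)).Exact := by
  let α : ShortComplex.mk _ _ (d_comp_augmentation P) ⟶
      ShortComplex.mk _ _ (d_comp_augmentation_comp P) :=
    { τ₁ := 𝟙 _
      τ₂ := 𝟙 _
      τ₃ := S.f
      comm₁₂ := by simp
      comm₂₃ := Category.id_comp _ }
  have : Epi α.τ₁ := inferInstanceAs (Epi (𝟙 _))
  have : IsIso α.τ₂ := inferInstanceAs (IsIso (𝟙 _))
  have : Mono α.τ₃ := inferInstanceAs (Mono S.f)
  exact (ShortComplex.exact_iff_of_epi_of_isIso_of_mono α).1 (exact_d_augmentation P)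

lemma exact_augmentation_comp (hS : S.Exact) (P : ProjectiveResolution S.X₁) :
    (ShortComplex.mk _ _ (augmentation_comp_comp P)).Exact := by
  let α : ShortComplex.mk _ _ (augmentation_comp_comp P) ⟶ S :=
    { τ₁ := augmentation P
      τ₂ := 𝟙 _
      τ₃ := 𝟙 _
      comm₁₂ := (Category.comp_id _).symm
      comm₂₃ := by simp }
  have : Epi α.τ₁ := epi_augmentation P
  have : IsIso α.τ₂ := inferInstanceAs (IsIso (𝟙 S.X₂))
  have : Mono α.τ₃ := inferInstanceAs (Mono (𝟙 S.X₃))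
  exact (ShortComplex.exact_iff_of_epi_of_isIso_of_mono α).2 hS

/-- The complex `⋯ ⟶ P₁ ⟶ P₀ ⟶ X₂` obtained by splicing a projective resolution `P` of `X₁`
with the map `X₁ ⟶ X₂` of a short complex `X₁ ⟶ X₂ ⟶ X₃`. -/
noncomputable def spliceComplex (P : ProjectiveResolution S.X₁) : ChainComplex C ℕ :=
  P.complex.augment (augmentation P ≫ S.f) (d_comp_augmentation_comp P)

lemma spliceComplex_exactAt_succ [Mono S.f] (P : ProjectiveResolution S.X₁) (n : ℕ) :
    (spliceComplex P).ExactAt (n + 1) := by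
  rw [HomologicalComplex.exactAt_iff' _ (n + 2) (n + 1) n (by simp) (by simp)]
  match n with
  | 0 => exact exact_d_augmentation_comp P
  | n + 1 => exact P.exact_succ n

/-- The augmentation of `spliceComplex P` given by the map `X₂ ⟶ X₃`. -/
noncomputable def spliceπ (P : ProjectiveResolution S.X₁) :
    spliceComplex P ⟶ (ChainComplex.single₀ C).obj S.X₃ :=
  (ChainComplex.toSingle₀Equiv (spliceComplex P) S.X₃).symm ⟨S.g, augmentation_comp_comp P⟩

lemma spliceπ_f_zero (P : ProjectiveResolution S.X₁) : (spliceπ P).f 0 = S.g :=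
  ChainComplex.toSingle₀Equiv_symm_apply_f_zero (C := spliceComplex P) (X := S.X₃) S.g
    (augmentation_comp_comp P)

lemma quasiIso_spliceπ (hS : S.ShortExact) (P : ProjectiveResolution S.X₁) :
    QuasiIso (spliceπ P) where
  quasiIsoAt
  | 0 => by
    rw [ChainComplex.quasiIsoAt₀_iff, ShortComplex.quasiIso_iff_of_zeros' _ rfl rfl rfl]
    refine (ShortComplex.exact_and_epi_g_iff_of_iso ?_).2
      ⟨exact_augmentation_comp hS.exact P, hS.epi_g⟩
    exact ShortComplex.isoMk (Iso.refl _) (Iso.refl _) (Iso.refl _)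
      ((Category.id_comp _).trans (Category.comp_id _).symm)
      ((Category.id_comp _).trans (.trans (spliceπ_f_zero P).symm (Category.comp_id _).symm))
  | n + 1 => by
    have := hS.mono_f
    rw [quasiIsoAt_iff_exactAt' _ _ (ChainComplex.exactAt_succ_single_obj _ _)]
    exact spliceComplex_exactAt_succ P n

/-- For a short exact sequence `0 ⟶ X₁ ⟶ X₂ ⟶ X₃ ⟶ 0` with `X₂` projective, the projective
resolution of `X₃` obtained by splicing the sequence with a projective resolution of `X₁`. -/
noncomputable def spliceResolution (hS : S.ShortExact) [Projective S.X₂]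
    (P : ProjectiveResolution S.X₁) : ProjectiveResolution S.X₃ where
  complex := spliceComplex P
  projective
  | 0 => inferInstanceAs (Projective S.X₂)
  | n + 1 => P.projective n
  π := spliceπ P
  quasiIso := quasiIso_spliceπ hS P

/-- Dimension shifting for left derived functors along a short exact sequence whose middle term
is projective. -/
noncomputable def leftDerivedAddTwoIso [HasProjectiveResolutions C] {D : Type*} [Category* D]
    [Abelian D] (F : C ⥤ D) [F.Additive] (hS : S.ShortExact) [Projective S.X₂] (n : ℕ) :
    (F.leftDerived (n + 2)).obj S.X₃ ≅ (F.leftDerived (n + 1)).obj S.X₁ :=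
  let P := projectiveResolution S.X₁
  let FP := (F.mapHomologicalComplex _).obj P.complex
  let FQ := (F.mapHomologicalComplex _).obj (spliceResolution hS P).complex
  let shift : FQ.sc (n + 2) ≅ FP.sc (n + 1) :=
    FQ.isoSc' (n + 3) (n + 2) (n + 1) (by simp) (by simp) ≪≫
      (FP.isoSc' (n + 2) (n + 1) n (by simp) (by simp)).symm
  (spliceResolution hS P).isoLeftDerivedObj F (n + 2) ≪≫ ShortComplex.homologyMapIso shift ≪≫
    (P.isoLeftDerivedObj F (n + 1)).symm

variable {R : Type*} [Ring R] [Linear R C] [EnoughProjectives C]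

/-- Dimension shifting for `Ext` in its first argument along a short exact sequence whose middle
term is projective. -/
noncomputable def extAddTwoIso (hS : S.ShortExact) [Projective S.X₂] (Y : C) (n : ℕ) :
    ((Ext R C (n + 1)).obj (Opposite.op S.X₁)).obj Y ≅
      ((Ext R C (n + 2)).obj (Opposite.op S.X₃)).obj Y :=
  (leftDerivedAddTwoIso ((linearYoneda R C).obj Y).rightOp hS n).unop

lemma exists_comp_eq_of_subsingleton_ext_one (hS : S.ShortExact) [Projective S.X₂] {Y : C}
    (hExt : Subsingleton (((Ext R C 1).obj (Opposite.op S.X₃)).obj Y)) (φ : S.X₁ ⟶ Y) :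
    ∃ ψ : S.X₂ ⟶ Y, S.f ≫ ψ = φ := by
  let P := projectiveResolution S.X₁
  let Q := spliceResolution hS P
  have hQ : IsZero ((Q.complex.linearYonedaObj R Y).homology 1) :=
    (ModuleCat.isZero_of_subsingleton _).of_iso (Q.isoExt 1 Y).symm
  rw [← HomologicalComplex.exactAt_iff_isZero_homology,
    HomologicalComplex.exactAt_iff' _ 0 1 2 (by simp) (by simp),
    ShortComplex.moduleCat_exact_iff] at hQ
  have hcocycle : P.complex.d 1 0 ≫ augmentation P ≫ φ = 0 := by
    rw [← Category.assoc, d_comp_augmentation, zero_comp]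
  obtain ⟨ψ, hψ⟩ : ∃ ψ : S.X₂ ⟶ Y, (augmentation P ≫ S.f) ≫ ψ = augmentation P ≫ φ :=
    hQ (augmentation P ≫ φ) hcocycle
  rw [Category.assoc] at hψ
  exact ⟨ψ, (cancel_epi (augmentation P)).1 hψ⟩

end Splice

section Dual

open Function
open Module (Dual)

variable {R K F M : Type*} [CommRing R] [AddCommGroup K] [Module R K] [AddCommGroup F] [Module R F]
  [AddCommGroup M] [Module R M] {i : K →ₗ[R] F} {f : F →ₗ[R] M}

lemma exact_dualMap (hif : Exact i f) (hf : Surjective f) : Exact f.dualMap i.dualMap :=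
  LinearMap.exact_lcomp_of_exact_of_surjective R hif hf

lemma exists_dualMap_retraction (hif : Exact i f) (hf : Surjective f)
    (hi : Surjective i.dualMap) [Module.Projective R (Dual R K)] :
    ∃ r : Dual R F →ₗ[R] Dual R M, r ∘ₗ f.dualMap = LinearMap.id := by
  have hsplit := ((exact_dualMap hif hf).split_tfae
    (LinearMap.dualMap_injective_of_surjective hf) hi).out 0 1
  exact hsplit.1 (Module.projective_lifting_property i.dualMap LinearMap.id hi)

lemma projective_dual_of_exact (hif : Exact i f) (hf : Surjective f)
    (hi : Surjective i.dualMap) [Module.Projective R (Dual R F)] [Module.Projective R (Dual R K)] :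
    Module.Projective R (Dual R M) :=
  have ⟨r, hr⟩ := exists_dualMap_retraction hif hf hi
  .of_split f.dualMap r hr

lemma eval_surjective_of_exact (hif : Exact i f) (hf : Surjective f)
    (hi : Surjective i.dualMap) [Module.IsReflexive R F] [Module.Projective R (Dual R K)] :
    Surjective (Dual.eval R M) := by
  obtain ⟨r, hr⟩ := exists_dualMap_retraction hif hf hi
  have hff : Surjective f.dualMap.dualMap :=
    LinearMap.surjective_of_comp_eq_id r.dualMap f.dualMap.dualMap (congrArg LinearMap.dualMap hr)
  have hcomp : Surjective (Dual.eval R M ∘ f) := by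
    rw [← LinearMap.coe_comp, ← Dual.eval_naturality]
    exact hff.comp (Module.bijective_dual_eval R F).surjective
  exact hcomp.of_comp

lemma eval_injective_of_exact (hif : Exact i f) (hf : Surjective f)
    (hi : Surjective i.dualMap) [Module.IsReflexive R F] (hK : Surjective (Dual.eval R K)) :
    Injective (Dual.eval R M) := by
  rw [injective_iff_map_eq_zero]
  intro m hm
  obtain ⟨x, rfl⟩ := hf m
  have hx : f.dualMap.dualMap (Dual.eval R F x) = 0 := hm
  obtain ⟨κ, hκ⟩ := (exact_dualMap (exact_dualMap hif hf) hi _).1 hx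
  obtain ⟨y, rfl⟩ := hK κ
  have hiy : i y = x := (Module.bijective_dual_eval R F).injective hκ
  rw [← hiy, hif.apply_apply_eq_zero]

end Dual

section BettiNumber

open Function
open Module (Dual)

universe u

variable (R : Type u) [CommRing R]

/-- Vanishing of `Ext^i(M, R)` for all `i > 0`, the part of total reflexivity that is inherited by
syzygies. -/
def HasVanishingExt (M : Type u) [AddCommGroup M] [Module R M] : Prop :=
  ∀ i : ℕ, 0 < i → Subsingleton (((Ext R (ModuleCat R) i).obj
    (Opposite.op (ModuleCat.of R M))).obj (ModuleCat.of R R))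

/-- The local ring `R` is BNSI above degree `ℓ`: the Betti numbers of every finitely generated
non-free module strictly increase from degree `ℓ` on. A ring is eventually BNSI if this holds for
some `ℓ`. The subtraction `i - 1` does not truncate, since `ℓ < i`. -/
def IsBNSIAbove [IsLocalRing R] (ℓ : ℕ) : Prop :=
  ∀ (N : Type u) [AddCommGroup N] [Module R N], Module.Finite R N → ¬ Module.Free R N →
    ∀ i : ℕ, ℓ < i → bettiNumber R N (i - 1) < bettiNumber R N i

variable {R} {K F M : Type u} [AddCommGroup K] [Module R K] [AddCommGroup F] [Module R F]
  [AddCommGroup M] [Module R M]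

lemma bettiNumber_add_two_of_exact [IsLocalRing R] [Module.Projective R F] {i : K →ₗ[R] F}
    {f : F →ₗ[R] M} (hif : Exact i f) (hi : Injective i) (hf : Surjective f) (n : ℕ) :
    bettiNumber R M (n + 2) = bettiNumber R K (n + 1) := by
  let S := ModuleCat.shortComplexOfCompEqZero i f hif.linearMap_comp_eq_zero
  have hS : S.ShortExact := ModuleCat.shortComplex_shortExact S hif hi hf
  let torIso := leftDerivedAddTwoIso ((MonoidalCategory.tensoringLeft (ModuleCat.{u} R)).obj
    (ModuleCat.of R (IsLocalRing.ResidueField R))) hS n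
  exact Order.krullDim_eq_of_orderIso (Submodule.orderIsoMapComap torIso.toLinearEquiv)

namespace HasVanishingExt

lemma ker [Module.Projective R F] (hM : HasVanishingExt R M) {f : F →ₗ[R] M} (hf : Surjective f) :
    HasVanishingExt R f.ker := by
  rintro (_ | n) hn
  · exact absurd hn (lt_irrefl 0)
  · let extIso := extAddTwoIso (R := R) (LinearMap.shortExact_shortComplexKer hf)
      (ModuleCat.of R R) n
    exact extIso.toLinearEquiv.toEquiv.subsingleton_congr.2 (hM (n + 2) (n + 1).succ_pos)

lemma dualMap_subtype_ker_surjective [Module.Projective R F] (hM : HasVanishingExt R M)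
    {f : F →ₗ[R] M} (hf : Surjective f) : Surjective f.ker.subtype.dualMap := by
  intro φ
  obtain ⟨ψ, hψ⟩ := exists_comp_eq_of_subsingleton_ext_one
    (LinearMap.shortExact_shortComplexKer hf) (hM 1 one_pos) (ModuleCat.ofHom φ)
  exact ⟨ψ.hom, congrArg ModuleCat.Hom.hom hψ⟩

variable [IsLocalRing R]

lemma bettiNumber_dual_ker [Module.Finite R F] [Module.Projective R F] (hM : HasVanishingExt R M)
    {f : F →ₗ[R] M} (hf : Surjective f) (n : ℕ) :
    bettiNumber R (Dual R f.ker) (n + 2) = bettiNumber R (Dual R M) (n + 1) :=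
  bettiNumber_add_two_of_exact (exact_dualMap f.exact_subtype_ker_map hf)
    (LinearMap.dualMap_injective_of_surjective hf) (hM.dualMap_subtype_ker_surjective hf) n

variable [IsNoetherianRing R] {ℓ : ℕ}

lemma free_dual (hR : IsBNSIAbove R ℓ) [Module.Finite R M] (hM : HasVanishingExt R M) :
    Module.Free R (Dual R M) := by
  induction hb : bettiNumber R (Dual R M) (ℓ + 1) using WellFoundedLT.induction
    generalizing M with
  | ind b ih =>
    subst hb
    by_contra hfree
    obtain ⟨m, f, hf⟩ := Module.Finite.exists_fin' R M
    have hker_not_free : ¬ Module.Free R (Dual R f.ker) := fun _ ↦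
      have := projective_dual_of_exact f.exact_subtype_ker_map hf
        (hM.dualMap_subtype_ker_surjective hf)
      hfree Module.free_of_flat_of_isLocalRing
    have hdrop := calc
      bettiNumber R (Dual R f.ker) (ℓ + 1)
        < bettiNumber R (Dual R f.ker) (ℓ + 2) :=
          hR (Dual R f.ker) inferInstance hker_not_free (ℓ + 2) (by lia)
      _ = bettiNumber R (Dual R M) (ℓ + 1) := hM.bettiNumber_dual_ker hf ℓ
    exact hker_not_free (ih _ hdrop (hM.ker hf) rfl)

lemma eval_surjective (hR : IsBNSIAbove R ℓ) [Module.Finite R M] (hM : HasVanishingExt R M) :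
    Surjective (Dual.eval R M) := by
  obtain ⟨m, f, hf⟩ := Module.Finite.exists_fin' R M
  have := (hM.ker hf).free_dual hR
  exact eval_surjective_of_exact f.exact_subtype_ker_map hf (hM.dualMap_subtype_ker_surjective hf)

lemma eval_injective (hR : IsBNSIAbove R ℓ) [Module.Finite R M] (hM : HasVanishingExt R M) :
    Injective (Dual.eval R M) := by
  obtain ⟨m, f, hf⟩ := Module.Finite.exists_fin' R M
  exact eval_injective_of_exact f.exact_subtype_ker_map hf (hM.dualMap_subtype_ker_surjective hf)
    ((hM.ker hf).eval_surjective hR)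

end HasVanishingExt

theorem stmt11_general (R : Type u) [CommRing R] [IsNoetherianRing R] [IsLocalRing R]
    (hBNSI : ∃ ℓ : ℕ, IsBNSIAbove R ℓ) (M : Type u) [AddCommGroup M] [Module R M]
    [Module.Finite R M] (hext : HasVanishingExt R M) : Module.Free R M := by
  obtain ⟨ℓ, hR⟩ := hBNSI
  have := hext.free_dual hR
  exact .of_equiv (LinearEquiv.ofBijective (Dual.eval R M)
    ⟨hext.eval_injective hR, hext.eval_surjective hR⟩).symm

end BettiNumber

/-- Let `(R,𝔪,k)` be a noetherian local ring which is eventually BNSI,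
i.e. there is `ℓ ≥ 1` such that for every finitely generated non-free `R`-module `M` and
every `i > ℓ` one has `β_i(M) > β_{i-1}(M)`. Then every finitely generated totally
reflexive `R`-module (reflexive with `Ext^i_R(M,R) = Ext^i_R(M*,R) = 0` for all `i > 0`)
is free. -/
theorem stmt11 (R : Type u) [CommRing R] [IsNoetherianRing R] [IsLocalRing R]
    (hBNSI : ∃ ℓ : ℕ, 1 ≤ ℓ ∧ ∀ (N : Type u) [AddCommGroup N] [Module R N],
      Module.Finite R N → ¬ Module.Free R N →
      ∀ i : ℕ, ℓ < i → bettiNumber R N (i - 1) < bettiNumber R N i)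
    (M : Type u) [AddCommGroup M] [Module R M] [Module.Finite R M]
    (hrefl : Module.IsReflexive R M)
    (hext : ∀ i : ℕ, 0 < i →
      Subsingleton (((Ext R (ModuleCat R) i).obj
        (Opposite.op (ModuleCat.of R M))).obj (ModuleCat.of R R)))
    (hext' : ∀ i : ℕ, 0 < i →
      Subsingleton (((Ext R (ModuleCat R) i).obj
        (Opposite.op (ModuleCat.of R (Module.Dual R M)))).obj (ModuleCat.of R R))) :
    Module.Free R M :=
  stmt11_general R (hBNSI.imp fun _ h ↦ h.2) M hext
end

section
/- Let (R,𝔪) be a noetherian local ring such that for every finitely generated R-module M, freeness of the dual M* implies freeness of M. Then R has depth zero, i.e., every element of 𝔪 is a zerodivisor on R. -/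
/-!
If `x` is regular, then `R ⧸ (x)` is killed by a regular element, so its dual is zero, hence free.
By hypothesis `R ⧸ (x)` is then free, so `x` is also regular on it; being killed by `x`, it
vanishes, which means that `x` is a unit.
-/

section QuotientByRegularElement

variable {R : Type*} [CommRing R] {x : R}

lemma mem_annihilator_quotient_span_singleton (x : R) :
    x ∈ Module.annihilator R (R ⧸ Ideal.span {x}) := by
  rw [Ideal.annihilator_quotient]
  exact Ideal.mem_span_singleton_self x

lemma subsingleton_dual_quotient_span_singleton (hx : IsRegular x) :
    Subsingleton (Module.Dual R (R ⧸ Ideal.span {x})) :=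
  hx.left.isSMulRegular.linearMap_subsingleton_of_mem_annihilator
    (mem_annihilator_quotient_span_singleton x)

lemma subsingleton_of_isSMulRegular_of_mem_annihilator {M : Type*} [AddCommGroup M] [Module R M]
    (hreg : IsSMulRegular M x) (hann : x ∈ Module.annihilator R M) : Subsingleton M :=
  subsingleton_of_forall_eq 0 fun m =>
    hreg.right_eq_zero_of_smul (Module.mem_annihilator.mp hann m)

lemma isUnit_of_flat_quotient_span_singleton (hx : IsRegular x)
    [Module.Flat R (R ⧸ Ideal.span {x})] : IsUnit x := by
  have hsub : Subsingleton (R ⧸ Ideal.span {x}) :=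
    subsingleton_of_isSMulRegular_of_mem_annihilator
      (Module.Flat.isSMulRegular_of_isRegular hx) (mem_annihilator_quotient_span_singleton x)
  rwa [Ideal.Quotient.subsingleton_iff, Ideal.span_singleton_eq_top] at hsub

end QuotientByRegularElement

theorem stmt12_general (R : Type u) [CommRing R]
    (h : ∀ (M : Type u) [AddCommGroup M] [Module R M], Module.Finite R M →
      Module.Free R (Module.Dual R M) → Module.Free R M) :
    ∀ x : R, ¬ IsUnit x → ¬ Function.Injective (fun r : R => x * r) := by
  intro x hx hinj
  have hreg : IsRegular x := isLeftRegular_iff_isRegular.mp hinj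
  have hdual : Subsingleton (Module.Dual R (R ⧸ Ideal.span {x})) :=
    subsingleton_dual_quotient_span_singleton hreg
  have hfree : Module.Free R (R ⧸ Ideal.span {x}) :=
    h _ inferInstance (Module.Free.of_subsingleton R _)
  exact hx (isUnit_of_flat_quotient_span_singleton hreg)

/-- Let `(R,𝔪)` be a noetherian local ring such that for every finitely
generated `R`-module `M`, freeness of the dual `M*` implies freeness of `M`. Then `R` has
depth zero, i.e. every element of `𝔪` is a zerodivisor on `R`. -/
theorem stmt12 (R : Type u) [CommRing R] [IsNoetherianRing R] [IsLocalRing R]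
    (h : ∀ (M : Type u) [AddCommGroup M] [Module R M], Module.Finite R M →
      Module.Free R (Module.Dual R M) → Module.Free R M) :
    ∀ x ∈ IsLocalRing.maximalIdeal R, ¬ Function.Injective (fun r : R => x * r) :=
  fun x hx => stmt12_general R h x ((IsLocalRing.mem_maximalIdeal x).mp hx)
end
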